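/- Let W = {(-2,0), (2,0), (-1,2), (1,2), (0,4), (0,4/3), (0,2), (-2/3,8/3), (2/3,8/3)} ⊆ ℝ², and set a = (-2,0), b = (2,0). Then W is a set of 9 points, not all contained in a single line, the line L_{a,b} is a simple line of W, but no simple wedge can be created from L_{a,b}: there is no point c ∈ W \ {a,b} such that L_{a,c} or L_{b,c} is a simple line of W. (Note that |W| = 9 is odd, but W is not 3-bounded.) -/

import Mathlib

/-- `L_{a,b}` is a simple line of `V`: `a, b` are distinct points of `V` and no
point of `V` other than `a` and `b` is collinear with `a` and `b`. -/
def SimpleLine (V : Set (ℝ × ℝ)) (a b : ℝ × ℝ) : Prop :=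
  a ∈ V ∧ b ∈ V ∧ a ≠ b ∧
    ∀ c ∈ V, Collinear ℝ ({a, b, c} : Set (ℝ × ℝ)) → c = a ∨ c = b

/-- `V` is 3-bounded: for all distinct `a, b ∈ V`, at most `3` points of `V`
are collinear with `a` and `b`. -/
def ThreeBounded (V : Set (ℝ × ℝ)) : Prop :=
  ∀ a ∈ V, ∀ b ∈ V, a ≠ b →
    ({c ∈ V | Collinear ℝ ({a, b, c} : Set (ℝ × ℝ))}).ncard ≤ 3

/-- `x 0, x 1, …, x (t-1)` (corresponding to `x_1, …, x_t`, so `1 ≤ t`) is an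
orbit of the simple line `L_{a,b}` in `V`:
(ℵ) each `x i` is a point of `V` different from `a` and `b`;
(ℶ) the points `x_1, …, x_{t-1}` are pairwise distinct;
(ℷ)/(ℸ) consecutive points are joined alternately through `b` and `a`:
`x_{2m}` is collinear with `b` and `x_{2m-1}`, and `x_{2m+1}` is collinear with
`a` and `x_{2m}` (in the `0`-based indexing below, `x (k+1)` is collinear with
`b` and `x k` for even `k`, and with `a` and `x k` for odd `k`). -/
def IsOrbit (V : Set (ℝ × ℝ)) (a b : ℝ × ℝ) (t : ℕ) (x : ℕ → ℝ × ℝ) : Prop :=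
  1 ≤ t ∧
  (∀ i < t, x i ∈ V ∧ x i ≠ a ∧ x i ≠ b) ∧
  (∀ i < t - 1, ∀ j < t - 1, i ≠ j → x i ≠ x j) ∧
  ∀ k, k + 1 < t →
    (Even k → Collinear ℝ ({b, x k, x (k + 1)} : Set (ℝ × ℝ))) ∧
    (Odd k → Collinear ℝ ({a, x k, x (k + 1)} : Set (ℝ × ℝ)))

/-- An orbit is open if `t = 1`, or `t > 1` and its first and last points differ. -/
def OpenOrbit (V : Set (ℝ × ℝ)) (a b : ℝ × ℝ) (t : ℕ) (x : ℕ → ℝ × ℝ) : Prop :=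
  IsOrbit V a b t x ∧ (t = 1 ∨ (1 < t ∧ x 0 ≠ x (t - 1)))

/-- An orbit is closed if `t > 1` and its first and last points coincide. -/
def ClosedOrbit (V : Set (ℝ × ℝ)) (a b : ℝ × ℝ) (t : ℕ) (x : ℕ → ℝ × ℝ) : Prop :=
  IsOrbit V a b t x ∧ 1 < t ∧ x 0 = x (t - 1)

/-- An orbit is maximal if it cannot be extended by one more point of `V`. -/
def MaximalOrbit (V : Set (ℝ × ℝ)) (a b : ℝ × ℝ) (t : ℕ) (x : ℕ → ℝ × ℝ) : Prop :=
  IsOrbit V a b t x ∧ ¬ ∃ y ∈ V, IsOrbit V a b (t + 1) (Function.update x t y)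

theorem collinear_iff_cross (a b c : ℝ × ℝ) :
    Collinear ℝ ({a, b, c} : Set (ℝ × ℝ)) ↔
      (b.1 - a.1) * (c.2 - a.2) = (c.1 - a.1) * (b.2 - a.2) := by
  constructor
  · intro h
    obtain ⟨v, hv⟩ := (collinear_iff_of_mem (p₀ := a) (by simp)).1 h
    obtain ⟨r, hr⟩ := hv b (by simp)
    obtain ⟨s, hs⟩ := hv c (by simp)
    subst hr
    subst hs
    simp
    ring
  · intro h
    by_cases hab : a = b
    · subst hab
      simpa using collinear_pair ℝ a c
    · apply (collinear_iff_of_mem (p₀ := a) (by simp)).2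
      refine ⟨b - a, ?_⟩
      intro p hp
      simp only [Set.mem_insert_iff, Set.mem_singleton_iff] at hp
      rcases hp with rfl | rfl | rfl
      · exact ⟨0, by simp⟩
      · exact ⟨1, by simp⟩
      · by_cases h1 : b.1 - a.1 = 0
        · have h2 : b.2 - a.2 ≠ 0 := by
            intro h2
            exact hab (Prod.ext (by linarith) (by linarith))
          refine ⟨(p.2 - a.2) / (b.2 - a.2), Prod.ext ?_ ?_⟩
          · simp
            field_simp
            linarith
          · simp
            field_simp
            ring
        · refine ⟨(p.1 - a.1) / (b.1 - a.1), Prod.ext ?_ ?_⟩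
          · simp
            field_simp
            ring
          · simp
            field_simp
            linarith

/-- The explicit set `W` of `9` non-collinear points has the
simple line `L_{a,b}` with `a = (-2,0)`, `b = (2,0)`, but no simple wedge can
be created from `L_{a,b}`; note `|W| = 9` is odd but `W` is not `3`-bounded. -/
theorem nine_points_no_wedge_from_simple_line :
    let W : Set (ℝ × ℝ) := {(-2, 0), (2, 0), (-1, 2), (1, 2), (0, 4), (0, 4/3),
      (0, 2), (-2/3, 8/3), (2/3, 8/3)}
    let a : ℝ × ℝ := (-2, 0)
    let b : ℝ × ℝ := (2, 0)
    W.ncard = 9 ∧ ¬ Collinear ℝ W ∧ SimpleLine W a b ∧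
      (¬ ∃ c ∈ W, c ≠ a ∧ c ≠ b ∧ (SimpleLine W a c ∨ SimpleLine W b c)) ∧
      Odd W.ncard ∧ ¬ ThreeBounded W := by
  intro W a b
  have hcard : W.ncard = 9 := by
    have : W = (({(-2, 0), (2, 0), (-1, 2), (1, 2), (0, 4), (0, 4/3),
      (0, 2), (-2/3, 8/3), (2/3, 8/3)} : Finset (ℝ × ℝ)) : Set (ℝ × ℝ)) := by
      simp [W]
    rw [this, Set.ncard_coe_finset]
    repeat rw [Finset.card_insert_of_notMem (by
      simp only [Finset.mem_insert, Finset.mem_singleton, Prod.mk.injEq]; norm_num)]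
    simp
  refine ⟨hcard, ?_, ?_, ?_, ?_, ?_⟩
  · intro h
    have h3 : Collinear ℝ ({(-2, 0), (2, 0), (-1, 2)} : Set (ℝ × ℝ)) := by
      refine h.subset ?_
      intro p hp
      simp only [Set.mem_insert_iff, Set.mem_singleton_iff] at hp
      simp only [W, Set.mem_insert_iff, Set.mem_singleton_iff]
      tauto
    rw [collinear_iff_cross] at h3
    norm_num at h3
  · refine ⟨by simp [W, a], by simp [W, b], ?_, ?_⟩
    · simp only [a, b, ne_eq, Prod.mk.injEq]
      norm_num
    · intro c hc h
      rw [collinear_iff_cross] at h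
      simp only [W, Set.mem_insert_iff, Set.mem_singleton_iff] at hc
      rcases hc with rfl | rfl | rfl | rfl | rfl | rfl | rfl | rfl | rfl <;>
        first
        | exact Or.inl rfl
        | exact Or.inr rfl
        | (exfalso; norm_num [a, b] at h)
  · -- a third point d of W on the line through p and c rules out simplicity
    have key : ∀ p c d : ℝ × ℝ, d ∈ W → d ≠ p → d ≠ c →
        (c.1 - p.1) * (d.2 - p.2) = (d.1 - p.1) * (c.2 - p.2) → ¬ SimpleLine W p c := by
      intro p c d hd h1 h2 h hs
      rcases hs.2.2.2 d hd ((collinear_iff_cross _ _ _).2 h) with h' | h'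
      · exact h1 h'
      · exact h2 h'
    have m3 : ((-1, 2) : ℝ × ℝ) ∈ W := by simp [W]
    have m4 : ((1, 2) : ℝ × ℝ) ∈ W := by simp [W]
    have m5 : ((0, 4) : ℝ × ℝ) ∈ W := by simp [W]
    have m6 : ((0, 4/3) : ℝ × ℝ) ∈ W := by simp [W]
    have m7 : ((0, 2) : ℝ × ℝ) ∈ W := by simp [W]
    have m8 : ((-2/3, 8/3) : ℝ × ℝ) ∈ W := by simp [W]
    have m9 : ((2/3, 8/3) : ℝ × ℝ) ∈ W := by simp [W]
    rintro ⟨c, hc, hca, hcb, h⟩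
    simp only [W, Set.mem_insert_iff, Set.mem_singleton_iff] at hc
    rcases hc with rfl | rfl | rfl | rfl | rfl | rfl | rfl | rfl | rfl
    · exact hca rfl
    · exact hcb rfl
    all_goals
      rcases h with h | h <;> revert h <;>
      first
      | (refine key _ _ _ m3 ?_ ?_ ?_ <;> norm_num [a, b, Prod.ext_iff] <;> done)
      | (refine key _ _ _ m4 ?_ ?_ ?_ <;> norm_num [a, b, Prod.ext_iff] <;> done)
      | (refine key _ _ _ m5 ?_ ?_ ?_ <;> norm_num [a, b, Prod.ext_iff] <;> done)
      | (refine key _ _ _ m6 ?_ ?_ ?_ <;> norm_num [a, b, Prod.ext_iff] <;> done)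
      | (refine key _ _ _ m7 ?_ ?_ ?_ <;> norm_num [a, b, Prod.ext_iff] <;> done)
      | (refine key _ _ _ m8 ?_ ?_ ?_ <;> norm_num [a, b, Prod.ext_iff] <;> done)
      | (refine key _ _ _ m9 ?_ ?_ ?_ <;> norm_num [a, b, Prod.ext_iff] <;> done)
  · rw [hcard]
    decide
  · intro h
    have h1 := h a (by simp [W, a]) (0, 4) (by simp [W])
      (by simp only [a, ne_eq, Prod.mk.injEq]; norm_num)
    have hfin : W.Finite := Set.finite_of_ncard_pos (by omega)
    have hsub : ((({(-2, 0), (-1, 2), (-2/3, 8/3), (0, 4)} : Finset (ℝ × ℝ))) : Set (ℝ × ℝ)) ⊆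
        {c ∈ W | Collinear ℝ ({a, (0, 4), c} : Set (ℝ × ℝ))} := by
      intro p hp
      simp only [Finset.coe_insert, Finset.coe_singleton, Set.mem_insert_iff,
        Set.mem_singleton_iff] at hp
      refine ⟨?_, ?_⟩
      · simp only [W, Set.mem_insert_iff, Set.mem_singleton_iff]
        tauto
      · rw [collinear_iff_cross]
        rcases hp with rfl | rfl | rfl | rfl <;> norm_num [a]
    have h2 := Set.ncard_le_ncard hsub (hfin.subset (Set.sep_subset _ _))
    rw [Set.ncard_coe_finset] at h2
    repeat rw [Finset.card_insert_of_notMem (by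
      simp only [Finset.mem_insert, Finset.mem_singleton, Prod.mk.injEq]; norm_num)] at h2
    rw [Finset.card_singleton] at h2
    omega
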